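/- arXiv:math/0412163 — 2 statements merged into one kernel-verified Lean document; each statement's English description precedes it below -/
import Mathlib

section
/- For every ρ > 1 and every N > 1 there exist a complex Hilbert space X and an N-tuple A = (A₁,…,A_N) of bounded linear operators on X belonging to the class C_{ρ,N} such that A is not simultaneously similar to any N-tuple T = (T₁,…,T_N) belonging to the class C_{1,N}; that is, there is no complex Hilbert space Y, no T ∈ C_{1,N} of bounded operators on Y, and no boundedly invertible operator S : X → Y with A_k = S^{−1} T_k S for all k = 1,…,N. -/
open ContinuousLinearMap

noncomputable section

/-- A continuous linear operator on a complex Hilbert space is unitary. -/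
def IsUnitaryOp {Y : Type*} [NormedAddCommGroup Y] [InnerProductSpace ℂ Y] [CompleteSpace Y]
    (T : Y →L[ℂ] Y) : Prop :=
  T ∘L adjoint T = 1 ∧ adjoint T ∘L T = 1

/-- A unitary `ρ`-dilation of an `N`-tuple of bounded operators on a complex Hilbert space `X`:
a complex Hilbert space `Y`, a linear isometry `ι : X → Y`, and an `N`-tuple `At` of operators
on `Y` such that every unimodular combination `ζ₁At₁ + ⋯ + ζ_N At_N` is unitary, and
`(z₁A₁ + ⋯ + z_N A_N)ⁿ = ρ · ι* ∘ (z₁At₁ + ⋯ + z_N At_N)ⁿ ∘ ι` for all `z ∈ ℂ^N` and `n ≥ 1`. -/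
structure UnitaryRhoDilation (N : ℕ) (ρ : ℝ) (X : Type*) [NormedAddCommGroup X]
    [InnerProductSpace ℂ X] [CompleteSpace X] (A : Fin N → X →L[ℂ] X) where
  Y : Type
  [instN : NormedAddCommGroup Y]
  [instI : InnerProductSpace ℂ Y]
  [instC : CompleteSpace Y]
  ι : X →L[ℂ] Y
  isom : Isometry ι
  At : Fin N → Y →L[ℂ] Y
  unit : ∀ ζ : Fin N → ℂ, (∀ k, ‖ζ k‖ = 1) → IsUnitaryOp (∑ k, ζ k • At k)
  dil : ∀ (z : Fin N → ℂ) (n : ℕ), 1 ≤ n →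
    (∑ k, z k • A k) ^ n = (ρ : ℂ) • (adjoint ι ∘L (((∑ k, z k • At k) ^ n) ∘L ι))

/-- The class `C_{ρ,N}`: `N`-tuples of bounded operators admitting a unitary `ρ`-dilation. -/
def MemC (N : ℕ) (ρ : ℝ) {X : Type*} [NormedAddCommGroup X] [InnerProductSpace ℂ X]
    [CompleteSpace X] (A : Fin N → X →L[ℂ] X) : Prop :=
  Nonempty (UnitaryRhoDilation N ρ X A)

/-- A witness for STATEMENT 8: a complex Hilbert space `X` together with an `N`-tuple
`A ∈ C_{ρ,N}` of operators on `X` which is not simultaneously similar to any `N`-tuple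
`T ∈ C_{1,N}` of operators on any complex Hilbert space `Y`. -/
structure NonSimilarWitness (N : ℕ) (ρ : ℝ) where
  X : Type
  [instN : NormedAddCommGroup X]
  [instI : InnerProductSpace ℂ X]
  [instC : CompleteSpace X]
  A : Fin N → X →L[ℂ] X
  mem : MemC N ρ A
  notSimilar : ∀ (Y : Type) [NormedAddCommGroup Y] [InnerProductSpace ℂ Y] [CompleteSpace Y]
    (T : Fin N → Y →L[ℂ] Y), MemC N 1 T → ∀ S : X ≃L[ℂ] Y,
    ¬ (∀ k, A k = (S.symm : Y →L[ℂ] X) ∘L (T k ∘L (S : X →L[ℂ] Y)))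
/-!
The ranges of the members of a unitary pencil are pairwise orthogonal, and their squared moduli add
up to `1`. Compressing, every commutator `⁅Tᵢ, Tⱼ⁆` with `i ≠ j` of a tuple in `C_{1,N}` is a
contraction, so an eigenvalue of `⁅Aᵢ, Aⱼ⁆` has modulus at most `1` whenever `A` is similar to such
a tuple.

For a unitary pencil `D` and isometries `V`, `W`, the tuple `V* Dₖ W` is in `C_{1,N}`: a reflection
on `ℓ²(ℤ; K)` followed by the shift replaces the output embedding `V` by the input embedding `W`, in
the manner of Schäffer's dilation. If moreover all combinations of a tuple `T` in `C_{1,N}` are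
nilpotent of order `3`, then `√ρ T` is in `C_{ρ,N}`, since only two powers have to be dilated: on
two copies of the dilation space, composing with the swap and embedding at an angle `θ` leaves even
powers alone and multiplies odd powers by `sin 2θ = 1 / √ρ`. Such a tuple on `ℂ³` has a commutator
with eigenvalue `-1`, which rescaling turns into `-ρ`.
-/


section StarAlgebra

variable {κ A A' : Type*} [Fintype κ] [Ring A] [StarRing A] [Algebra ℂ A]
  [Ring A'] [StarRing A'] [Algebra ℂ A']

/-- A finite family `B` in a complex star algebra is a *unitary pencil* if `∑ ζ k • B k` is unitary
for every choice of unimodular scalars `ζ k`. -/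
def IsUnitaryPencil (B : κ → A) : Prop :=
  ∀ ζ : κ → ℂ, (∀ k, ‖ζ k‖ = 1) → ∑ k, ζ k • B k ∈ unitary A

theorem IsUnitaryPencil.map {B : κ → A} (hB : IsUnitaryPencil B) {F : Type*} [FunLike F A A']
    [AlgHomClass F ℂ A A'] [StarHomClass F A A'] (f : F) : IsUnitaryPencil fun k => f (B k) :=
  fun ζ hζ => by simpa only [map_sum, map_smul] using Unitary.map_mem f (hB ζ hζ)

theorem IsUnitaryPencil.unitary_mul {B : κ → A} (hB : IsUnitaryPencil B) {u : A}
    (hu : u ∈ unitary A) : IsUnitaryPencil fun k => u * B k := fun ζ hζ => by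
  simpa only [Finset.mul_sum, mul_smul_comm] using mul_mem hu (hB ζ hζ)

variable [StarModule ℂ A]

theorem star_mul_eq_zero_of_forall_add_smul_mem_unitary {a b : A}
    (h : ∀ ε : ℂ, ‖ε‖ = 1 → a + ε • b ∈ unitary A) : star a * b = 0 := by
  have expand (ε : ℂ) (hε : ‖ε‖ = 1) :
      star a * a + star b * b + ε • (star a * b) + star ε • (star b * a) = 1 := by
    have hεε : star ε * ε = 1 := by
      simp [← Complex.normSq_eq_conj_mul_self, Complex.normSq_eq_norm_sq, hε]
    rw [← Unitary.star_mul_self_of_mem (h ε hε)]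
    simp only [star_add, star_smul, add_mul, mul_add, smul_mul_assoc, mul_smul_comm, smul_add,
      smul_smul, hεε, one_smul, mul_comm ε]
    abel
  -- Averaging `ε⁻¹ • expand ε` over the fourth roots of unity isolates the coefficient of `ε`.
  have h₁ := expand 1 (by simp)
  have h₂ := expand (-1) (by simp)
  have h₃ := expand Complex.I (by simp)
  have h₄ := expand (-Complex.I) (by simp)
  have key : (4 : ℂ) • (star a * b) = 0 := by
    linear_combination (norm := skip) h₁ - h₂ - Complex.I • h₃ + Complex.I • h₄
    simp only [Complex.star_def, Complex.conj_I, map_neg, map_one]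
    match_scalars <;> ring_nf <;> simp [Complex.I_sq]
  simpa using key

theorem IsUnitaryPencil.star_mul_eq_zero {B : κ → A} (hB : IsUnitaryPencil B) {i j : κ}
    (hij : i ≠ j) : star (B i) * B j = 0 := by
  classical
  set R : A := ∑ k, B k - B i - B j
  have mem_unitary (c ε : ℂ) (hc : ‖c‖ = 1) (hε : ‖ε‖ = 1) :
      R + c • B i + ε • B j ∈ unitary A := by
    convert hB (1 + Pi.single i (c - 1) + Pi.single j (ε - 1)) fun k => ?_ using 1
    · simp only [Pi.add_apply, Pi.one_apply, Pi.single_apply, add_smul, one_smul, ite_smul,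
        zero_smul, Finset.sum_add_distrib, Finset.sum_ite_eq', Finset.mem_univ, if_true, R]
      module
    · obtain rfl | hi := eq_or_ne k i
      · simpa [hij] using hc
      · obtain rfl | hj := eq_or_ne k j <;> simp [*]
  have star_add_smul_mul (c : ℂ) (hc : ‖c‖ = 1) : star (R + c • B i) * B j = 0 :=
    star_mul_eq_zero_of_forall_add_smul_mem_unitary fun ε hε => mem_unitary c ε hc hε
  have h₁ := star_add_smul_mul 1 (by simp)
  have h₂ := star_add_smul_mul (-1) (by simp)
  simp only [star_add, star_neg, one_smul, neg_smul, add_mul, neg_mul] at h₁ h₂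
  have key : (2 : ℂ) • (star (B i) * B j) = 0 := by
    linear_combination (norm := module) h₁ - h₂
  simpa using key

theorem IsUnitaryPencil.sum_star_mul_self {B : κ → A} (hB : IsUnitaryPencil B) :
    ∑ k, star (B k) * B k = 1 := by
  have h := Unitary.star_mul_self_of_mem (hB 1 (by simp))
  simp only [Pi.one_apply, one_smul, star_sum, Finset.sum_mul_sum] at h
  rw [← h]
  refine Finset.sum_congr rfl fun i _ => ?_
  rw [Finset.sum_eq_single i (fun j _ hji => hB.star_mul_eq_zero hji.symm) (by simp)]

end StarAlgebra

section Operators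

variable {X Y : Type*} [NormedAddCommGroup X] [InnerProductSpace ℂ X] [CompleteSpace X]
  [NormedAddCommGroup Y] [InnerProductSpace ℂ Y] [CompleteSpace Y]

theorem isUnitaryOp_iff_mem_unitary {T : Y →L[ℂ] Y} : IsUnitaryOp T ↔ T ∈ unitary (Y →L[ℂ] Y) := by
  rw [Unitary.mem_iff, and_comm]
  rfl

theorem one_sub_comp_adjoint_mem_unitary {c : X →L[ℂ] Y} (hc : adjoint c ∘L c = (2 : ℂ) • 1) :
    1 - c ∘L adjoint c ∈ unitary (Y →L[ℂ] Y) := by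
  have star_eq : star (1 - c ∘L adjoint c) = 1 - c ∘L adjoint c := by
    simp [star_eq_adjoint, adjoint_comp]
  have sq_eq : (1 - c ∘L adjoint c) * (1 - c ∘L adjoint c) = 1 := by
    have : (c ∘L adjoint c) * (c ∘L adjoint c) = (2 : ℂ) • (c ∘L adjoint c) := by
      rw [mul_def, comp_assoc, ← comp_assoc (adjoint c) c, hc]
      ext; simp
    rw [sub_mul, mul_sub, mul_sub, this]
    simp only [one_mul, mul_one]
    module
  rw [Unitary.mem_iff, star_eq]
  exact ⟨sq_eq, sq_eq⟩

theorem adjoint_comp_pow_comp_eq_pow {ι : X →L[ℂ] Y} {B : Y →L[ℂ] Y} {L : X →L[ℂ] X}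
    {F : Submodule ℂ Y} (hι : adjoint ι ∘L ι = 1) (hF : ∀ y ∈ F, adjoint ι y = 0)
    (hBF : ∀ y ∈ F, B y ∈ F) (hBι : ∀ x, B (ι x) - ι (L x) ∈ F) (n : ℕ) :
    adjoint ι ∘L ((B ^ n) ∘L ι) = L ^ n := by
  have pow_sub_mem (x : X) : (B ^ n) (ι x) - ι ((L ^ n) x) ∈ F := by
    induction n with
    | zero => simp
    | succ n ih =>
      have := F.add_mem (hBF _ ih) (hBι ((L ^ n) x))
      simpa [pow_succ'] using this
  ext x
  have := hF _ (pow_sub_mem x)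
  rw [map_sub, sub_eq_zero] at this
  simpa using this.trans (DFunLike.congr_fun hι _)

namespace IsUnitaryPencil

variable {κ : Type*} [Fintype κ] {B : κ → Y →L[ℂ] Y}

theorem norm_apply_add_apply_sq (hB : IsUnitaryPencil B) {i j : κ} (hij : i ≠ j) (x y : Y) :
    ‖B i x + B j y‖ ^ 2 = ‖B i x‖ ^ 2 + ‖B j y‖ ^ 2 := by
  have orthogonal : inner ℂ (B i x) (B j y) = 0 := by
    have : adjoint (B i) (B j y) = 0 := DFunLike.congr_fun (hB.star_mul_eq_zero hij) y
    rw [← adjoint_inner_right, this, inner_zero_right]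
  simpa only [sq] using norm_add_sq_eq_norm_sq_add_norm_sq_of_inner_eq_zero _ _ orthogonal

theorem sum_norm_apply_sq (hB : IsUnitaryPencil B) (x : Y) : ∑ k, ‖B k x‖ ^ 2 = ‖x‖ ^ 2 := by
  have (k : κ) : ‖B k x‖ ^ 2 = RCLike.re (inner ℂ ((star (B k) * B k) x) x) :=
    apply_norm_sq_eq_inner_adjoint_left (B k) x
  simp only [this, ← map_sum, ← sum_inner, ← sum_apply, hB.sum_star_mul_self, one_apply_eq_self,
    inner_self_eq_norm_sq]

theorem norm_apply_le (hB : IsUnitaryPencil B) (i : κ) (x : Y) : ‖B i x‖ ≤ ‖x‖ := by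
  refine (sq_le_sq₀ (norm_nonneg _) (norm_nonneg x)).1 ?_
  rw [← hB.sum_norm_apply_sq x]
  exact Finset.single_le_sum (f := fun k => ‖B k x‖ ^ 2) (fun _ _ => sq_nonneg _)
    (Finset.mem_univ i)

end IsUnitaryPencil

end Operators

section SquareSummable

variable {ι ι' K : Type*} [NormedAddCommGroup K]

/-- The Hilbert space `ℓ²(ι; K)`. -/
abbrev L2Seq (ι K : Type*) [NormedAddCommGroup K] : Type _ := lp (fun _ : ι => K) 2

theorem memℓp_two_comp_equiv (x : L2Seq ι K) (e : ι' ≃ ι) : Memℓp (fun i => x (e i)) 2 := by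
  have hx := lp.memℓp x
  rw [memℓp_gen_iff (by simp)] at hx ⊢
  exact e.summable_iff (f := fun i => ‖x i‖ ^ (2 : ENNReal).toReal) |>.2 hx

variable [InnerProductSpace ℂ K]

variable (K) in
/-- The unitary `ℓ²(ι; K) ≃ ℓ²(ι'; K)` relabelling the coordinates along `e`. -/
def l2Congr (e : ι ≃ ι') : L2Seq ι K ≃ₗᵢ[ℂ] L2Seq ι' K where
  toFun x := ⟨fun i => x (e.symm i), memℓp_two_comp_equiv x e.symm⟩
  invFun x := ⟨fun i => x (e i), memℓp_two_comp_equiv x e⟩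
  map_add' _ _ := rfl
  map_smul' _ _ := rfl
  left_inv _ := by ext; simp
  right_inv _ := by ext; simp
  norm_map' x := by
    rw [lp.norm_eq_tsum_rpow (by simp), lp.norm_eq_tsum_rpow (by simp)]
    congr 1
    exact e.symm.tsum_eq fun i => ‖x i‖ ^ (2 : ENNReal).toReal

@[simp]
theorem l2Congr_apply (e : ι ≃ ι') (x : L2Seq ι K) (i : ι') : l2Congr K e x i = x (e.symm i) := rfl

/-- The embedding of `K` as the `i`-th coordinate subspace of `ℓ²(ι; K)`. -/
def l2Single [DecidableEq ι] (i : ι) : K →L[ℂ] L2Seq ι K :=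
  lp.singleContinuousLinearMap ℂ (fun _ => K) 2 i

@[simp]
theorem l2Single_apply_apply [DecidableEq ι] (i j : ι) (x : K) :
    l2Single i x j = if j = i then x else 0 := by
  simp [l2Single, lp.single_apply, Pi.single_apply]

@[simp]
theorem l2Congr_l2Single [DecidableEq ι] [DecidableEq ι'] (e : ι ≃ ι') (i : ι) (x : K) :
    l2Congr K e (l2Single i x) = l2Single (e i) x := by
  ext j
  simp [Equiv.symm_apply_eq]

variable [CompleteSpace K]

@[simp]
theorem adjoint_l2Single_apply [DecidableEq ι] (i : ι) (y : L2Seq ι K) :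
    adjoint (l2Single i) y = y i :=
  ext_inner_left ℂ fun x => by
    rw [adjoint_inner_right]
    exact lp.inner_single_left (𝕜 := ℂ) i x y

variable (ι K) in
/-- The ampliation `T ↦ ⨁ᵢ T` of operators on `K` to block-diagonal operators on `ℓ²(ι; K)`. -/
def l2Ampliation : (K →L[ℂ] K) →⋆ₐ[ℂ] (L2Seq ι K →L[ℂ] L2Seq ι K) where
  toFun T := lp.mapCLM 2 (fun _ => T) (norm_nonneg T) fun _ => le_rfl
  map_one' := by ext; simp
  map_mul' _ _ := by ext; simp
  map_zero' := by ext; simp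
  map_add' _ _ := by ext; simp
  commutes' _ := by ext; simp [Algebra.algebraMap_eq_smul_one]
  map_star' T := by
    refine (eq_adjoint_iff _ _).2 fun x y => ?_
    simp [lp.inner_eq_tsum, star_eq_adjoint, adjoint_inner_left]

@[simp]
theorem l2Ampliation_apply (T : K →L[ℂ] K) (x : L2Seq ι K) (i : ι) :
    l2Ampliation ι K T x i = T (x i) := by
  simp [l2Ampliation]

@[simp]
theorem l2Ampliation_l2Single [DecidableEq ι] (T : K →L[ℂ] K) (i : ι) (x : K) :
    l2Ampliation ι K T (l2Single i x) = l2Single i (T x) := by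
  ext j
  by_cases hj : j = i <;> simp [hj]

theorem adjoint_l2Single_comp_comp_self [DecidableEq ι] {X : Type*} [NormedAddCommGroup X]
    [InnerProductSpace ℂ X] [CompleteSpace X] {W : X →L[ℂ] K} (hW : adjoint W ∘L W = 1) (i : ι) :
    adjoint (l2Single i ∘L W) ∘L (l2Single i ∘L W) = 1 := by
  ext x
  simpa [adjoint_comp] using DFunLike.congr_fun hW x

end SquareSummable

section Schaffer

variable {X K : Type*} [NormedAddCommGroup X] [InnerProductSpace ℂ X] [CompleteSpace X]
  [NormedAddCommGroup K] [InnerProductSpace ℂ K] [CompleteSpace K]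
  (V W : X →L[ℂ] K)

/-- The operator `c = J₋₁W − J₀V : X → ℓ²(ℤ; K)`, where `Jₙ` embeds `K` as the `n`-th coordinate.
For isometries `V` and `W`, `1 - c c*` is the reflection exchanging `J₀V` and `J₋₁W`. -/
def schafferDefect : X →L[ℂ] L2Seq ℤ K :=
  l2Single (-1) ∘L W - l2Single 0 ∘L V

theorem adjoint_schafferDefect_apply (y : L2Seq ℤ K) :
    adjoint (schafferDefect V W) y = adjoint W (y (-1)) - adjoint V (y 0) := by
  simp [schafferDefect, adjoint_comp]

variable {V W}

theorem adjoint_schafferDefect_comp_self (hV : adjoint V ∘L V = 1) (hW : adjoint W ∘L W = 1) :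
    adjoint (schafferDefect V W) ∘L schafferDefect V W = (2 : ℂ) • 1 := by
  ext x
  have hVx : adjoint V (V x) = x := DFunLike.congr_fun hV x
  have hWx : adjoint W (W x) = x := DFunLike.congr_fun hW x
  rw [comp_apply, adjoint_schafferDefect_apply]
  simp [schafferDefect, hVx, hWx, two_smul]

variable (V W) in
/-- The bilateral shift of `ℓ²(ℤ; K)` precomposed with the reflection exchanging `J₀V` and `J₋₁W`.
It maps `J₀V` to `J₀W`, so its product with a block-diagonal operator `⨁ D` is, along `J₀W`, a
dilation of `V* D W` as in Schäffer's construction. -/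
def schafferShift : L2Seq ℤ K →L[ℂ] L2Seq ℤ K :=
  (l2Congr K (Equiv.addRight (1 : ℤ)) : L2Seq ℤ K →L[ℂ] L2Seq ℤ K) *
    (1 - schafferDefect V W ∘L adjoint (schafferDefect V W))

theorem schafferShift_mem_unitary (hV : adjoint V ∘L V = 1) (hW : adjoint W ∘L W = 1) :
    schafferShift V W ∈ unitary (L2Seq ℤ K →L[ℂ] L2Seq ℤ K) :=
  mul_mem (Unitary.linearIsometryEquiv.symm (l2Congr K (Equiv.addRight (1 : ℤ)))).2
    (one_sub_comp_adjoint_mem_unitary (adjoint_schafferDefect_comp_self hV hW))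

variable (V W)

theorem schafferShift_l2Single_zero (k : K) :
    schafferShift V W (l2Single 0 k) =
      l2Single 0 (W (adjoint V k)) + l2Single 1 (k - V (adjoint V k)) := by
  have adjoint_apply : adjoint (schafferDefect V W) (l2Single 0 k) = -adjoint V k := by
    simp [adjoint_schafferDefect_apply]
  have reflection_apply : l2Single 0 k - schafferDefect V W (-adjoint V k) =
      l2Single (-1) (W (adjoint V k)) + l2Single 0 (k - V (adjoint V k)) := by
    simp only [schafferDefect, sub_apply, comp_apply, map_neg, map_sub]
    abel
  rw [schafferShift, mul_apply_eq_comp, sub_apply, one_apply_eq_self, comp_apply, adjoint_apply,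
    reflection_apply]
  simp

/-- The sequences in `ℓ²(ℤ; K)` supported on the positive integers. -/
def l2Pos (K : Type*) [NormedAddCommGroup K] [InnerProductSpace ℂ K] :
    Submodule ℂ (L2Seq ℤ K) where
  carrier := {y | ∀ j ≤ 0, y j = 0}
  add_mem' hx hy j hj := by simp [hx j hj, hy j hj]
  zero_mem' _ _ := rfl
  smul_mem' c x hx j hj := by simp [hx j hj]

theorem schafferShift_mem_l2Pos {y : L2Seq ℤ K} (hy : y ∈ l2Pos K) :
    schafferShift V W y ∈ l2Pos K := fun j hj => by
  simp [schafferShift, adjoint_schafferDefect_apply, hy (-1) (by simp), hy 0 le_rfl,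
    hy (j + -1) (by lia)]

variable {V W}

theorem adjoint_comp_schafferShift_pow_comp (hW : adjoint W ∘L W = 1) (D : K →L[ℂ] K) (n : ℕ) :
    adjoint (l2Single 0 ∘L W) ∘L
      (((schafferShift V W * l2Ampliation ℤ K D) ^ n) ∘L (l2Single 0 ∘L W)) =
        (adjoint V ∘L (D ∘L W)) ^ n := by
  refine adjoint_comp_pow_comp_eq_pow (F := l2Pos K) (adjoint_l2Single_comp_comp_self hW 0)
    (fun y hy => ?_) (fun y hy => ?_) (fun x => ?_) n
  · simp [adjoint_comp, hy 0 le_rfl]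
  · exact schafferShift_mem_l2Pos V W fun j hj => by simp [hy j hj]
  · intro j hj
    simp [schafferShift_l2Single_zero, (by lia : j ≠ 1)]

end Schaffer

theorem memC_one_of_isUnitaryPencil {X : Type*} {K : Type} [NormedAddCommGroup X]
    [InnerProductSpace ℂ X] [CompleteSpace X] [NormedAddCommGroup K] [InnerProductSpace ℂ K]
    [CompleteSpace K] {N : ℕ} {D : Fin N → K →L[ℂ] K} (hD : IsUnitaryPencil D)
    {V W : X →L[ℂ] K} (hV : adjoint V ∘L V = 1) (hW : adjoint W ∘L W = 1) :
    MemC N 1 fun k => adjoint V ∘L (D k ∘L W) := by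
  refine ⟨{
    Y := L2Seq ℤ K
    ι := l2Single 0 ∘L W
    At := fun k => schafferShift V W * l2Ampliation ℤ K (D k)
    isom := (isometry_iff_adjoint_comp_self _).2 (adjoint_l2Single_comp_comp_self hW 0)
    unit := fun ζ hζ => isUnitaryOp_iff_mem_unitary.2 <|
      (hD.map (l2Ampliation ℤ K)).unitary_mul (schafferShift_mem_unitary hV hW) ζ hζ
    dil := fun z n _ => ?_ }⟩
  have := adjoint_comp_schafferShift_pow_comp (V := V) hW (∑ k, z k • D k) n
  simp only [Complex.ofReal_one, one_smul]
  simpa [Finset.mul_sum, comp_finsetSum, finsetSum_comp] using this.symm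

section Rescaling

variable {K : Type*} [NormedAddCommGroup K] [InnerProductSpace ℂ K]

variable (K) in
/-- The unitary exchanging the two summands of `K ⊕ K`, realised as `ℓ²(Bool; K)`. -/
def l2Swap : L2Seq Bool K →L[ℂ] L2Seq Bool K := l2Congr K Equiv.boolNot

@[simp]
theorem l2Swap_apply (x : L2Seq Bool K) (b : Bool) : l2Swap K x b = x !b := rfl

theorem l2Swap_sq : l2Swap K ^ 2 = 1 := by
  ext
  simp [sq]

variable (K) in
/-- The embedding `x ↦ (cos θ • x, sin θ • x)` of `K` into `K ⊕ K`, an isometry along which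
`l2Swap K` compresses to the scalar `sin 2θ`. -/
def l2Tilt (θ : ℝ) : K →L[ℂ] L2Seq Bool K :=
  Complex.cos θ • l2Single true + Complex.sin θ • l2Single false

theorem l2Tilt_apply_apply (θ : ℝ) (x : K) (b : Bool) :
    l2Tilt K θ x b = cond b (Complex.cos θ) (Complex.sin θ) • x := by
  change Complex.cos θ • l2Single true x b + Complex.sin θ • l2Single false x b = _
  cases b <;> simp

variable [CompleteSpace K]

theorem l2Swap_mem_unitary : l2Swap K ∈ unitary (L2Seq Bool K →L[ℂ] L2Seq Bool K) :=
  (Unitary.linearIsometryEquiv.symm (l2Congr K Equiv.boolNot)).2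

theorem commute_l2Swap_l2Ampliation (B : K →L[ℂ] K) :
    Commute (l2Swap K) (l2Ampliation Bool K B) := by
  ext
  simp

theorem adjoint_l2Tilt_apply (θ : ℝ) (y : L2Seq Bool K) :
    adjoint (l2Tilt K θ) y = Complex.cos θ • y true + Complex.sin θ • y false := by
  simp [l2Tilt, map_smulₛₗ, ← Complex.cos_conj, ← Complex.sin_conj]

theorem l2Ampliation_comp_l2Tilt (B : K →L[ℂ] K) (θ : ℝ) :
    l2Ampliation Bool K B ∘L l2Tilt K θ = l2Tilt K θ ∘L B := by
  ext x
  simp [l2Tilt]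

theorem adjoint_l2Tilt_comp_self (θ : ℝ) : adjoint (l2Tilt K θ) ∘L l2Tilt K θ = 1 := by
  ext x
  rw [comp_apply, adjoint_l2Tilt_apply]
  simp [l2Tilt_apply_apply, smul_smul, ← add_smul, ← sq]

theorem adjoint_l2Tilt_comp_l2Swap_comp_l2Tilt (θ : ℝ) :
    adjoint (l2Tilt K θ) ∘L (l2Swap K ∘L l2Tilt K θ) = (Real.sin (2 * θ) : ℂ) • 1 := by
  ext x
  rw [comp_apply, adjoint_l2Tilt_apply]
  simp only [comp_apply, l2Swap_apply, l2Tilt_apply_apply, Bool.not_true, Bool.not_false, cond_true,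
    cond_false, smul_apply, one_apply_eq_self, Complex.ofReal_sin, Complex.ofReal_mul,
    Complex.ofReal_ofNat, Complex.sin_two_mul]
  module

theorem adjoint_l2Tilt_comp_pow_comp_l2Tilt (θ : ℝ) (B : K →L[ℂ] K) (n : ℕ) :
    adjoint (l2Tilt K θ) ∘L (((l2Swap K * l2Ampliation Bool K B) ^ n) ∘L l2Tilt K θ) =
      (if Even n then 1 else Real.sin (2 * θ) : ℂ) • B ^ n := by
  rw [(commute_l2Swap_l2Ampliation B).mul_pow, ← map_pow, mul_def, comp_assoc,
    l2Ampliation_comp_l2Tilt, ← comp_assoc, ← comp_assoc, comp_assoc (adjoint _)]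
  obtain ⟨m, rfl⟩ | ⟨m, rfl⟩ := n.even_or_odd
  · rw [← two_mul, pow_mul, l2Swap_sq, one_pow, one_def, id_comp, adjoint_l2Tilt_comp_self,
      one_def, id_comp, if_pos (even_two_mul m), one_smul]
  · rw [pow_succ, pow_mul, l2Swap_sq, one_pow, one_mul, adjoint_l2Tilt_comp_l2Swap_comp_l2Tilt,
      if_neg (by simp), smul_comp, one_def, id_comp]

end Rescaling

section Dilation

variable {X : Type*} [NormedAddCommGroup X] [InnerProductSpace ℂ X] [CompleteSpace X] {N : ℕ}

attribute [instance] UnitaryRhoDilation.instN UnitaryRhoDilation.instI UnitaryRhoDilation.instC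

namespace UnitaryRhoDilation

variable {ρ : ℝ} {A : Fin N → X →L[ℂ] X} (d : UnitaryRhoDilation N ρ X A)

theorem isUnitaryPencil : IsUnitaryPencil d.At := fun ζ hζ =>
  isUnitaryOp_iff_mem_unitary.1 (d.unit ζ hζ)

theorem apply_eq (k : Fin N) (x : X) : A k x = (ρ : ℂ) • adjoint d.ι (d.At k (d.ι x)) := by
  simpa [Pi.single_apply] using DFunLike.congr_fun (d.dil (Pi.single k 1) 1 le_rfl) x

theorem norm_ι_apply (x : X) : ‖d.ι x‖ = ‖x‖ := d.isom.norm_map_of_map_zero (map_zero _) x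

theorem norm_adjoint_ι_apply_le (y : d.Y) : ‖adjoint d.ι y‖ ≤ ‖y‖ := by
  have : ‖adjoint d.ι‖ ≤ 1 := by
    rw [LinearIsometryEquiv.norm_map]
    exact d.ι.opNorm_le_bound zero_le_one fun x => by rw [d.norm_ι_apply, one_mul]
  simpa using (adjoint d.ι).le_of_opNorm_le this y

theorem adjoint_l2Tilt_comp_pow_comp_l2Tilt (θ : ℝ) (z : Fin N → ℂ) {n : ℕ} (hn : 1 ≤ n) :
    (ρ : ℂ) • (adjoint (l2Tilt d.Y θ ∘L d.ι) ∘L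
      (((∑ k, z k • (l2Swap d.Y * l2Ampliation Bool d.Y (d.At k))) ^ n) ∘L
        (l2Tilt d.Y θ ∘L d.ι))) =
      (if Even n then 1 else Real.sin (2 * θ) : ℂ) • (∑ k, z k • A k) ^ n := by
  have pencil_eq : ∑ k, z k • (l2Swap d.Y * l2Ampliation Bool d.Y (d.At k)) =
      l2Swap d.Y * l2Ampliation Bool d.Y (∑ k, z k • d.At k) := by simp [Finset.mul_sum]
  rw [pencil_eq, adjoint_comp, comp_assoc, ← comp_assoc _ (l2Tilt d.Y θ), ← comp_assoc _ _ d.ι,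
    _root_.adjoint_l2Tilt_comp_pow_comp_l2Tilt, d.dil z n hn, smul_comp, comp_smul, smul_comm]

end UnitaryRhoDilation

namespace MemC

theorem sqrt_smul {ρ r : ℝ} (hr : 1 ≤ r) {T : Fin N → X →L[ℂ] X} (hT : MemC N ρ T)
    (hnil : ∀ z : Fin N → ℂ, (∑ k, z k • T k) ^ 3 = 0) :
    MemC N (r * ρ) fun k => (√r : ℂ) • T k := by
  obtain ⟨d⟩ := hT
  have sin_eq : Real.sin (2 * (Real.arcsin (√r)⁻¹ / 2)) = (√r)⁻¹ := by
    rw [mul_div_cancel₀ _ two_ne_zero]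
    exact Real.sin_arcsin (by linarith [inv_nonneg.2 (Real.sqrt_nonneg r)])
      (inv_le_one_of_one_le₀ (Real.one_le_sqrt.2 hr))
  have sqrt_sq : (√r : ℂ) ^ 2 = r := by exact_mod_cast Real.sq_sqrt (by linarith)
  set θ := Real.arcsin (√r)⁻¹ / 2
  refine ⟨{
    Y := L2Seq Bool d.Y
    ι := l2Tilt d.Y θ ∘L d.ι
    At := fun k => l2Swap d.Y * l2Ampliation Bool d.Y (d.At k)
    isom := (((l2Tilt d.Y θ).isometry_iff_adjoint_comp_self).2 (adjoint_l2Tilt_comp_self θ)).comp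
      d.isom
    unit := fun ζ hζ => isUnitaryOp_iff_mem_unitary.2 <|
      (d.isUnitaryPencil.map (l2Ampliation Bool d.Y)).unitary_mul l2Swap_mem_unitary ζ hζ
    dil := fun z n hn => ?_ }⟩
  rw [Complex.ofReal_mul, mul_smul, d.adjoint_l2Tilt_comp_pow_comp_l2Tilt θ z hn, sin_eq]
  have smul_sum : ∑ k, z k • (√r : ℂ) • T k = (√r : ℂ) • ∑ k, z k • T k := by
    simp only [Finset.smul_sum, smul_comm (√r : ℂ)]
  rw [smul_sum, smul_pow, smul_smul]
  obtain rfl | rfl | hn3 : n = 1 ∨ n = 2 ∨ 3 ≤ n := by lia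
  · have : (r : ℂ) * (√r : ℂ)⁻¹ = √r := by rw [← sqrt_sq]; field_simp
    simp [this]
  · simp [sqrt_sq]
  · rw [pow_eq_zero_of_le hn3 (hnil z), smul_zero, smul_zero]

variable {T : Fin N → X →L[ℂ] X} {i j : Fin N}

theorem norm_apply_add_apply_sq_le (hT : MemC N 1 T) (hij : i ≠ j) (x y : X) :
    ‖T i x + T j y‖ ^ 2 ≤ ‖x‖ ^ 2 + ‖y‖ ^ 2 := by
  obtain ⟨d⟩ := hT
  calc ‖T i x + T j y‖ ^ 2 = ‖adjoint d.ι (d.At i (d.ι x) + d.At j (d.ι y))‖ ^ 2 := by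
        simp [d.apply_eq]
    _ ≤ ‖d.At i (d.ι x) + d.At j (d.ι y)‖ ^ 2 := by
        gcongr
        exact d.norm_adjoint_ι_apply_le _
    _ = ‖d.At i (d.ι x)‖ ^ 2 + ‖d.At j (d.ι y)‖ ^ 2 :=
        d.isUnitaryPencil.norm_apply_add_apply_sq hij _ _
    _ ≤ ‖d.ι x‖ ^ 2 + ‖d.ι y‖ ^ 2 := by
        gcongr <;> exact d.isUnitaryPencil.norm_apply_le _ _
    _ = ‖x‖ ^ 2 + ‖y‖ ^ 2 := by simp only [d.norm_ι_apply]

theorem norm_apply_sq_add_norm_apply_sq_le (hT : MemC N 1 T) (hij : i ≠ j) (x : X) :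
    ‖T i x‖ ^ 2 + ‖T j x‖ ^ 2 ≤ ‖x‖ ^ 2 := by
  obtain ⟨d⟩ := hT
  have norm_apply_le (k : Fin N) : ‖T k x‖ ≤ ‖d.At k (d.ι x)‖ := by
    simpa [d.apply_eq] using d.norm_adjoint_ι_apply_le (d.At k (d.ι x))
  calc ‖T i x‖ ^ 2 + ‖T j x‖ ^ 2 ≤ ‖d.At i (d.ι x)‖ ^ 2 + ‖d.At j (d.ι x)‖ ^ 2 := by
        gcongr <;> exact norm_apply_le _
    _ ≤ ∑ k, ‖d.At k (d.ι x)‖ ^ 2 :=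
        Finset.add_le_sum (f := fun k => ‖d.At k (d.ι x)‖ ^ 2) (fun _ _ => sq_nonneg _)
          (Finset.mem_univ i) (Finset.mem_univ j) hij
    _ = ‖x‖ ^ 2 := by rw [d.isUnitaryPencil.sum_norm_apply_sq, d.norm_ι_apply]

theorem norm_commutator_apply_le (hT : MemC N 1 T) (hij : i ≠ j) (x : X) :
    ‖⁅T i, T j⁆ x‖ ≤ ‖x‖ := by
  refine (sq_le_sq₀ (norm_nonneg _) (norm_nonneg x)).1 ?_
  calc ‖⁅T i, T j⁆ x‖ ^ 2 = ‖T i (T j x) + T j (-T i x)‖ ^ 2 := by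
        simp [Ring.lie_def, sub_eq_add_neg]
    _ ≤ ‖T j x‖ ^ 2 + ‖-T i x‖ ^ 2 := hT.norm_apply_add_apply_sq_le hij _ _
    _ ≤ ‖x‖ ^ 2 := by
        simpa [add_comm] using hT.norm_apply_sq_add_norm_apply_sq_le hij x

theorem norm_le_one_of_commutator_apply_eq_smul (hT : MemC N 1 T) (hij : i ≠ j)
    {Z : Type*} [NormedAddCommGroup Z] [NormedSpace ℂ Z] {A : Fin N → Z →L[ℂ] Z}
    (S : Z ≃L[ℂ] X) (hA : ∀ k, A k = (S.symm : X →L[ℂ] Z) ∘L (T k ∘L (S : Z →L[ℂ] X)))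
    {c : ℂ} {v : Z} (hv : v ≠ 0) (hcv : ⁅A i, A j⁆ v = c • v) : ‖c‖ ≤ 1 := by
  have hS : ⁅T i, T j⁆ (S v) = c • S v := by
    rw [← map_smul, ← hcv]
    simp [Ring.lie_def, hA]
  have := hT.norm_commutator_apply_le hij (S v)
  rw [hS, norm_smul] at this
  exact (mul_le_iff_le_one_left (by simpa using hv)).1 this

end MemC

end Dilation

section Example

section ColorProjection

variable {κ ι : Type*} [Fintype κ] [DecidableEq κ] [DecidableEq ι]

/-- The coordinate projection of `ℂ^ι` onto the coordinates of colour `k`. For a fixed colouring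
these projections have sum `1`, and they are the simplest unitary pencils. -/
def colorProj (color : ι → κ) (k : κ) : Matrix ι ι ℂ :=
  Matrix.diagonal fun a => if color a = k then 1 else 0

theorem sum_smul_colorProj (color : ι → κ) (z : κ → ℂ) :
    ∑ k, z k • colorProj color k = Matrix.diagonal (z ∘ color) := by
  ext a b
  obtain rfl | hab := eq_or_ne a b <;> simp [colorProj, Matrix.sum_apply, *]

theorem isUnitaryPencil_colorProj [Fintype ι] (color : ι → κ) :
    IsUnitaryPencil (colorProj color) := fun ζ hζ => by
  rw [sum_smul_colorProj, Unitary.mem_iff]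
  simp [Matrix.star_eq_conjTranspose, Matrix.diagonal_conjTranspose, Complex.conj_mul',
    Complex.mul_conj', hζ]

end ColorProjection

/-- The isometry `W` in the factorisation `V* Dₖ W` of `nilpotentTuple`. -/
def inIsometry : EuclideanSpace ℂ (Fin 3) →ₗᵢ[ℂ] EuclideanSpace ℂ (Fin 4) where
  toFun x := !₂[x 2, (√2 : ℂ)⁻¹ * x 1, x 0, -((√2 : ℂ)⁻¹ * x 1)]
  map_add' x y := by ext a; fin_cases a <;> simp <;> ring
  map_smul' c x := by ext a; fin_cases a <;> simp <;> ring
  norm_map' x := by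
    rw [← sq_eq_sq₀ (norm_nonneg _) (norm_nonneg _), EuclideanSpace.norm_sq_eq,
      EuclideanSpace.norm_sq_eq]
    simp only [LinearMap.coe_mk, AddHom.coe_mk, Fin.sum_univ_three, Fin.sum_univ_four,
      Matrix.cons_val, norm_mul, norm_neg, norm_inv, Complex.norm_real, Real.norm_eq_abs, mul_pow,
      inv_pow, sq_abs, Real.sq_sqrt zero_le_two]
    ring

/-- The isometry `V` in the factorisation `V* Dₖ W` of `nilpotentTuple`. -/
def outIsometry : EuclideanSpace ℂ (Fin 3) →ₗᵢ[ℂ] EuclideanSpace ℂ (Fin 4) where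
  toFun x := !₂[(√2 : ℂ)⁻¹ * x 1, x 0, (√2 : ℂ)⁻¹ * x 1, x 2]
  map_add' x y := by ext a; fin_cases a <;> simp <;> ring
  map_smul' c x := by ext a; fin_cases a <;> simp <;> ring
  norm_map' x := by
    rw [← sq_eq_sq₀ (norm_nonneg _) (norm_nonneg _), EuclideanSpace.norm_sq_eq,
      EuclideanSpace.norm_sq_eq]
    simp only [LinearMap.coe_mk, AddHom.coe_mk, Fin.sum_univ_three, Fin.sum_univ_four,
      Matrix.cons_val, norm_mul, norm_inv, Complex.norm_real, Real.norm_eq_abs, mul_pow,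
      inv_pow, sq_abs, Real.sq_sqrt zero_le_two]
    ring

variable {N : ℕ} (i j : Fin N)

/-- The operators `Tₖ = V* Dₖ W` on `ℂ³`, where the coordinates of `ℂ⁴` have colours `i, i, j, j`
and `Dₖ` projects onto those of colour `k`. For `i ≠ j`, only `Tᵢ` and `Tⱼ` are nonzero, and
with `s = 1 / √2` they act by `Tᵢ : e₂ ↦ s e₁ ↦ s² e₀ ↦ 0` and `Tⱼ : e₀ ↦ s e₁ ↦ -s² e₂ ↦ 0`. -/
def nilpotentTuple (k : Fin N) : EuclideanSpace ℂ (Fin 3) →L[ℂ] EuclideanSpace ℂ (Fin 3) :=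
  adjoint outIsometry.toContinuousLinearMap ∘L
    (Matrix.toEuclideanCLM (𝕜 := ℂ) (colorProj ![i, i, j, j] k) ∘L
      inIsometry.toContinuousLinearMap)

theorem memC_one_nilpotentTuple : MemC N 1 (nilpotentTuple i j) :=
  memC_one_of_isUnitaryPencil
    (D := fun k => Matrix.toEuclideanCLM (𝕜 := ℂ) (colorProj ![i, i, j, j] k))
    ((isUnitaryPencil_colorProj ![i, i, j, j]).map (Matrix.toEuclideanCLM (𝕜 := ℂ)))
    ((isometry_iff_adjoint_comp_self _).1 outIsometry.isometry)
    ((isometry_iff_adjoint_comp_self _).1 inIsometry.isometry)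

theorem adjoint_outIsometry_apply (y : EuclideanSpace ℂ (Fin 4)) :
    adjoint outIsometry.toContinuousLinearMap y = !₂[y 1, (√2 : ℂ)⁻¹ * (y 0 + y 2), y 3] := by
  refine ext_inner_left ℂ fun x => ?_
  rw [adjoint_inner_right]
  simp only [outIsometry, LinearIsometry.coe_toContinuousLinearMap, LinearIsometry.coe_mk,
    LinearMap.coe_mk, AddHom.coe_mk, PiLp.inner_apply, RCLike.inner_apply, Fin.sum_univ_three,
    Fin.sum_univ_four, Matrix.cons_val, map_mul, map_inv₀, Complex.conj_ofReal]
  ring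

theorem sum_smul_nilpotentTuple_apply (z : Fin N → ℂ) (x : EuclideanSpace ℂ (Fin 3)) :
    (∑ k, z k • nilpotentTuple i j k) x = !₂[(√2 : ℂ)⁻¹ * (z i * x 1),
      (√2 : ℂ)⁻¹ * (z i * x 2 + z j * x 0), -((√2 : ℂ)⁻¹ * (z j * x 1))] := by
  have sum_eq : ∑ k, z k • nilpotentTuple i j k = adjoint outIsometry.toContinuousLinearMap ∘L
      (Matrix.toEuclideanCLM (𝕜 := ℂ) (Matrix.diagonal (z ∘ ![i, i, j, j])) ∘L
        inIsometry.toContinuousLinearMap) := by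
    simp [← sum_smul_colorProj, nilpotentTuple, comp_finsetSum, finsetSum_comp]
  rw [sum_eq, comp_apply, adjoint_outIsometry_apply]
  ext a
  fin_cases a <;> simp [inIsometry, Matrix.mulVec_diagonal] <;> ring

theorem sum_smul_nilpotentTuple_pow_three (z : Fin N → ℂ) :
    (∑ k, z k • nilpotentTuple i j k) ^ 3 = 0 := by
  ext x a
  rw [pow_three, mul_apply_eq_comp, mul_apply_eq_comp]
  simp only [sum_smul_nilpotentTuple_apply]
  fin_cases a <;> simp [-mul_eq_zero] <;> ring

variable {i j}

theorem nilpotentTuple_commutator_apply (hij : i ≠ j) :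
    ⁅nilpotentTuple i j i, nilpotentTuple i j j⁆ (EuclideanSpace.single 1 1) =
      (-1 : ℂ) • EuclideanSpace.single 1 1 := by
  have sum_single (k : Fin N) :
      ∑ l, (Pi.single k 1 : Fin N → ℂ) l • nilpotentTuple i j l = nilpotentTuple i j k :=
    (Fintype.linearCombination_apply_single ℂ (nilpotentTuple i j) k 1).trans (one_smul ℂ _)
  have apply_left (x) : nilpotentTuple i j i x = !₂[(√2 : ℂ)⁻¹ * x 1, (√2 : ℂ)⁻¹ * x 2, 0] := by
    rw [← sum_single i, sum_smul_nilpotentTuple_apply]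
    simp [hij.symm]
  have apply_right (x) :
      nilpotentTuple i j j x = !₂[0, (√2 : ℂ)⁻¹ * x 0, -((√2 : ℂ)⁻¹ * x 1)] := by
    rw [← sum_single j, sum_smul_nilpotentTuple_apply]
    simp [hij]
  have inv_sqrt_two_mul_self : (√2 : ℂ)⁻¹ * (√2 : ℂ)⁻¹ = 1 / 2 := by
    rw [← mul_inv]
    norm_cast
    simp
  ext a
  fin_cases a <;> simp [Ring.lie_def, apply_left, apply_right, inv_sqrt_two_mul_self]
  norm_num

end Example

/-- for every `ρ > 1` and `N > 1` there is a complex Hilbert space `X` and an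
`N`-tuple `A ∈ C_{ρ,N}` on `X` not simultaneously similar to any `T ∈ C_{1,N}`. -/
theorem exists_memC_not_similar (ρ : ℝ) (hρ : 1 < ρ) (N : ℕ) (hN : 1 < N) :
    Nonempty (NonSimilarWitness N ρ) := by
  let i : Fin N := ⟨0, by lia⟩
  let j : Fin N := ⟨1, hN⟩
  have hij : i ≠ j := by simp [i, j]
  let A : Fin N → EuclideanSpace ℂ (Fin 3) →L[ℂ] EuclideanSpace ℂ (Fin 3) :=
    fun k => (√ρ : ℂ) • nilpotentTuple i j k
  have commutator_apply : ⁅A i, A j⁆ (EuclideanSpace.single 1 1) =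
      (-ρ : ℂ) • EuclideanSpace.single 1 1 := by
    have sqrt_mul_self : (√ρ : ℂ) * √ρ = ρ := by exact_mod_cast Real.mul_self_sqrt (by linarith)
    have smul_commutator : ⁅A i, A j⁆ = (ρ : ℂ) • ⁅nilpotentTuple i j i, nilpotentTuple i j j⁆ := by
      simp only [A, Ring.lie_def, smul_mul_smul_comm, sqrt_mul_self, smul_sub]
    rw [smul_commutator, smul_apply, nilpotentTuple_commutator_apply hij, neg_smul, neg_smul,
      one_smul, smul_neg]
  have memC_A : MemC N ρ A := by
    simpa only [mul_one] using
      (memC_one_nilpotentTuple i j).sqrt_smul hρ.le (sum_smul_nilpotentTuple_pow_three i j)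
  refine ⟨⟨_, A, memC_A, fun Y _ _ _ T hT S hS => ?_⟩⟩
  have norm_le := hT.norm_le_one_of_commutator_apply_eq_smul hij S hS (by simp) commutator_apply
  rw [norm_neg, Complex.norm_real, Real.norm_of_nonneg (by linarith)] at norm_le
  exact hρ.not_ge norm_le
end
end

section
/- Let N ≥ 1, ρ > 0, and let A = (A₁,…,A_N) be an N-tuple of bounded linear operators on a complex Hilbert space X admitting a uniform unitary ρ-dilation. Then A admits a uniform isometric ρ-dilation in the sense of Popescu; that is, C^u_{ρ,N} ⊆ C^P_{ρ,N}. -/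
open ContinuousLinearMap

noncomputable section

/-- A uniform unitary `ρ`-dilation of an `N`-tuple of bounded operators on a complex Hilbert
space `X`: a complex Hilbert space `Y`, a linear isometry `ι : X → Y`, and an `N`-tuple `At`
of operators on `Y` such that every unimodular combination `ζ₁At₁ + ⋯ + ζ_N At_N` is unitary,
and for every nonempty word `i₁,…,iₙ` one has
`A_{i₁}⋯A_{iₙ} = ρ · ι* ∘ (At_{i₁}⋯At_{iₙ}) ∘ ι`. -/
structure UniformUnitaryRhoDilation (N : ℕ) (ρ : ℝ) (X : Type*) [NormedAddCommGroup X]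
    [InnerProductSpace ℂ X] [CompleteSpace X] (A : Fin N → X →L[ℂ] X) where
  Y : Type
  [instN : NormedAddCommGroup Y]
  [instI : InnerProductSpace ℂ Y]
  [instC : CompleteSpace Y]
  ι : X →L[ℂ] Y
  isom : Isometry ι
  At : Fin N → Y →L[ℂ] Y
  unit : ∀ ζ : Fin N → ℂ, (∀ k, ‖ζ k‖ = 1) → IsUnitaryOp (∑ k, ζ k • At k)
  dil : ∀ w : List (Fin N), w ≠ [] →
    (w.map A).prod = (ρ : ℂ) • (adjoint ι ∘L ((w.map At).prod ∘L ι))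

/-- The class `C^u_{ρ,N}`: `N`-tuples admitting a uniform unitary `ρ`-dilation. -/
def MemCu (N : ℕ) (ρ : ℝ) {X : Type*} [NormedAddCommGroup X] [InnerProductSpace ℂ X]
    [CompleteSpace X] (A : Fin N → X →L[ℂ] X) : Prop :=
  Nonempty (UniformUnitaryRhoDilation N ρ X A)

/-- A uniform isometric `ρ`-dilation in the sense of Popescu: a complex Hilbert space `Y`,
a linear isometry `ι : X → Y`, and operators `V₁,…,V_N` on `Y` with `V_k* V_k = I`,
`V_k* V_j = 0` for `k ≠ j`, and `A_{i₁}⋯A_{iₙ} = ρ · ι* ∘ (V_{i₁}⋯V_{iₙ}) ∘ ι` for every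
nonempty word `i₁,…,iₙ`. -/
structure PopescuRhoDilation (N : ℕ) (ρ : ℝ) (X : Type*) [NormedAddCommGroup X]
    [InnerProductSpace ℂ X] [CompleteSpace X] (A : Fin N → X →L[ℂ] X) where
  Y : Type
  [instN : NormedAddCommGroup Y]
  [instI : InnerProductSpace ℂ Y]
  [instC : CompleteSpace Y]
  ι : X →L[ℂ] Y
  isom : Isometry ι
  V : Fin N → Y →L[ℂ] Y
  isometric : ∀ k, adjoint (V k) ∘L V k = 1
  orth : ∀ k j, k ≠ j → adjoint (V k) ∘L V j = 0
  dil : ∀ w : List (Fin N), w ≠ [] →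
    (w.map A).prod = (ρ : ℂ) • (adjoint ι ∘L ((w.map V).prod ∘L ι))

/-- The Popescu class `C^P_{ρ,N}`: `N`-tuples admitting a uniform isometric `ρ`-dilation. -/
def MemCP (N : ℕ) (ρ : ℝ) {X : Type*} [NormedAddCommGroup X] [InnerProductSpace ℂ X]
    [CompleteSpace X] (A : Fin N → X →L[ℂ] X) : Prop :=
  Nonempty (PopescuRhoDilation N ρ X A)

/-!
If `∑ ζ k • B k` is unitary for all unimodular `ζ`, comparing Fourier coefficients in `ζ` gives
`B j* B k = 0` for `j ≠ k` and `∑ B k B k* = 1`, so the `B k` are partial isometries with pairwise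
orthogonal ranges. On the full Fock space `ℓ²(words, Y)`, with vacuum embedding `Ω` and creation
operators `S k`, complete `Ω B k Ω*` to an isometry by letting `S k` act on the orthogonal
complement of its initial space. The result is a coextension of `B`, and dilations compose.
-/

lemma sum_update_smul {ι R M : Type*} [Fintype ι] [DecidableEq ι] [Ring R] [AddCommGroup M]
    [Module R M] (x : ι → M) (c : ι → R) (a : ι) (s : R) :
    ∑ k, Function.update c a s k • x k = ∑ k, c k • x k + (s - c a) • x a := by
  simp_rw [Function.apply_update (fun k r => r • x k) c a s]
  rw [Finset.sum_update_of_mem (Finset.mem_univ a),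
    Finset.sum_eq_add_sum_sdiff_singleton_of_mem (Finset.mem_univ a) (fun k => c k • x k), sub_smul]
  abel

section UniformlyUnitary

/-- A family of partial isometries with pairwise orthogonal ranges, in a star ring. -/
structure IsOrthogonalPartialIsometries {ι R : Type*} [MulZeroClass R] [Star R] (B : ι → R) :
    Prop where
  mul_star_mul_self : ∀ k, B k * star (B k) * B k = B k
  star_mul_eq_zero : Pairwise fun j k => star (B j) * B k = 0

/-- A finite family in a complex star algebra all of whose unimodular combinations are unitary. -/
def IsUniformlyUnitary {ι R : Type*} [Fintype ι] [Semiring R] [StarRing R] [Algebra ℂ R]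
    (B : ι → R) : Prop :=
  ∀ ζ : ι → ℂ, (∀ k, ‖ζ k‖ = 1) → ∑ k, ζ k • B k ∈ unitary R

variable {ι R : Type*} [Ring R] [StarRing R] [Algebra ℂ R] [StarModule ℂ R]

lemma star_mul_eq_zero_of_forall_star_smul_add_mul_self {x y : R}
    (h : ∀ s : ℂ, ‖s‖ = 1 → star (s • x + y) * (s • x + y) = 1) : star x * y = 0 := by
  -- After multiplication by `s`, `star x * y` is the constant Fourier coefficient in `s`; it is
  -- recovered by averaging over the fourth roots of unity.
  have expand (s : ℂ) (hs : ‖s‖ = 1) :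
      s • (1 : R) = star x * y + s • (star x * x + star y * y) + s ^ 2 • (star y * x) := by
    have hss : s * star s = 1 := by simpa [hs] using Complex.mul_conj' s
    calc
      s • (1 : R) = s • (star (s • x + y) * (s • x + y)) := by rw [h s hs]
      _ = (s * star s) • (star x * y) + s • ((s * star s) • (star x * x) + star y * y) +
          s ^ 2 • (star y * x) := by
        simp only [star_add, star_smul, add_mul, mul_add, smul_mul_assoc, mul_smul_comm]
        module
      _ = star x * y + s • (star x * x + star y * y) + s ^ 2 • (star y * x) := by
        rw [hss, one_smul, one_smul]
  have h1 := expand 1 (by simp)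
  have h2 := expand (-1) (by simp)
  have h3 := expand Complex.I (by simp)
  have h4 := expand (-Complex.I) (by simp)
  simp only [neg_sq, one_pow, Complex.I_sq] at h1 h2 h3 h4
  linear_combination (norm := module) (-1 / 4 : ℂ) • (h1 + h2 + h3 + h4)

namespace IsUniformlyUnitary

variable [Fintype ι] {B : ι → R}

protected lemma star (hB : IsUniformlyUnitary B) : IsUniformlyUnitary fun k => star (B k) := by
  intro ζ hζ
  have h := hB (fun k => star (ζ k)) fun k => by rw [norm_star, hζ k]
  simpa only [star_sum, star_smul, star_star] using Unitary.star_mem h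

lemma star_mul_sum_smul (hB : IsUniformlyUnitary B) {ζ : ι → ℂ} (hζ : ∀ k, ‖ζ k‖ = 1) (a : ι) :
    star (B a) * ∑ k, ζ k • B k = ζ a • (star (B a) * B a) := by
  classical
  have hzero : star (B a) * (∑ k, ζ k • B k - ζ a • B a) = 0 :=
    star_mul_eq_zero_of_forall_star_smul_add_mul_self fun s hs => by
      have hs' := Unitary.star_mul_self_of_mem
        (hB (Function.update ζ a s)
          ((Function.forall_update_iff ζ fun _ z => ‖z‖ = 1).2 ⟨hs, fun k _ => hζ k⟩))
      rw [sum_update_smul] at hs'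
      rwa [show ∑ k, ζ k • B k + (s - ζ a) • B a = s • B a + (∑ k, ζ k • B k - ζ a • B a) by
        module] at hs'
  rwa [mul_sub, mul_smul_comm, sub_eq_zero] at hzero

lemma star_mul_eq_zero (hB : IsUniformlyUnitary B) : Pairwise fun j k => star (B j) * B k = 0 := by
  classical
  intro j k hjk
  have hone := hB.star_mul_sum_smul (ζ := fun _ => 1) (by simp) j
  have hneg := hB.star_mul_sum_smul (ζ := Function.update (fun _ => 1) k (-1))
    ((Function.forall_update_iff _ fun _ z => ‖z‖ = 1).2 (by simp)) j
  rw [sum_update_smul, Function.update_of_ne hjk, mul_add, hone, mul_smul_comm] at hneg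
  have htwo : (-1 - 1 : ℂ) ≠ 0 := by norm_num
  simpa [htwo] using hneg

lemma sum_star_mul_self (hB : IsUniformlyUnitary B) : ∑ k, star (B k) * B k = 1 := by
  have hU := hB (fun _ => 1) (by simp)
  calc
    ∑ k, star (B k) * B k = ∑ k, star (B k) * ∑ j, (1 : ℂ) • B j := by
      refine Finset.sum_congr rfl fun k _ => ?_
      rw [hB.star_mul_sum_smul (ζ := fun _ => 1) (by simp), one_smul]
    _ = star (∑ k, (1 : ℂ) • B k) * ∑ j, (1 : ℂ) • B j := by
      simp only [one_smul, star_sum, Finset.sum_mul]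
    _ = 1 := Unitary.star_mul_self_of_mem hU

lemma mul_star_mul_self (hB : IsUniformlyUnitary B) (k : ι) : B k * star (B k) * B k = B k := by
  have hsum : ∑ j, B j * star (B j) = 1 := by simpa only [star_star] using hB.star.sum_star_mul_self
  calc
    B k * star (B k) * B k = ∑ j, B j * star (B j) * B k := by
      rw [Finset.sum_eq_single_of_mem k (Finset.mem_univ k)]
      intro j _ hj
      rw [mul_assoc, hB.star_mul_eq_zero hj, mul_zero]
    _ = B k := by rw [← Finset.sum_mul, hsum, one_mul]

lemma isOrthogonalPartialIsometries (hB : IsUniformlyUnitary B) :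
    IsOrthogonalPartialIsometries B :=
  ⟨hB.mul_star_mul_self, hB.star_mul_eq_zero⟩

end IsUniformlyUnitary

end UniformlyUnitary

section FockSpace

/-- The full Fock space over an alphabet `α` with coefficients in `H`, realized as the square
summable `H`-valued functions on words. -/
abbrev FockSpace (α H : Type*) [NormedAddCommGroup H] : Type _ :=
  lp (fun _ : List α => H) 2

variable {𝕜 α H : Type*} [RCLike 𝕜] [DecidableEq α]
  [NormedAddCommGroup H] [InnerProductSpace 𝕜 H]

variable (𝕜 H) in
/-- The embedding of `H` into the Fock space as the functions supported at the word `w`. -/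
def wordEmbedding (w : List α) : H →ₗᵢ[𝕜] FockSpace α H where
  toLinearMap := lp.lsingle (E := fun _ : List α => H) 2 w
  norm_map' := lp.norm_single (E := fun _ : List α => H) (p := 2) (by norm_num) w

lemma wordEmbedding_apply (w : List α) (y : H) : wordEmbedding 𝕜 H w y = lp.single 2 w y := rfl

lemma inner_wordEmbedding_left (w : List α) (y : H) (f : FockSpace α H) :
    inner 𝕜 (wordEmbedding 𝕜 H w y) f = inner 𝕜 y (f w) :=
  lp.inner_single_left (G := fun _ : List α => H) w y f

lemma orthogonalFamily_wordEmbedding :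
    OrthogonalFamily 𝕜 (fun _ : List α => H) (wordEmbedding 𝕜 H) := by
  intro v w hvw x y
  rw [inner_wordEmbedding_left, wordEmbedding_apply, lp.single_apply_ne _ _ _ hvw, inner_zero_right]

variable [CompleteSpace H]

variable (𝕜 α H) in
/-- The embedding of `H` into the Fock space as its vacuum component. -/
def vacuum : H →L[𝕜] FockSpace α H :=
  (wordEmbedding 𝕜 H []).toContinuousLinearMap

variable (𝕜 H) in
/-- The left creation operator, which prepends the letter `k` to every word. -/
def creation (k : α) : FockSpace α H →L[𝕜] FockSpace α H :=
  ((orthogonalFamily_wordEmbedding (𝕜 := 𝕜) (H := H)).comp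
    (List.cons_injective (a := k))).linearIsometry.toContinuousLinearMap

lemma creation_wordEmbedding (k : α) (w : List α) (y : H) :
    creation 𝕜 H k (wordEmbedding 𝕜 H w y) = wordEmbedding 𝕜 H (k :: w) y :=
  OrthogonalFamily.linearIsometry_apply_single
    (orthogonalFamily_wordEmbedding.comp List.cons_injective) y

lemma adjoint_creation_apply (k : α) (f : FockSpace α H) (w : List α) :
    (adjoint (creation 𝕜 H k) f) w = f (k :: w) := by
  refine ext_inner_left 𝕜 fun y => ?_
  rw [← inner_wordEmbedding_left, adjoint_inner_right, creation_wordEmbedding,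
    inner_wordEmbedding_left]

lemma adjoint_creation_wordEmbedding {k : α} {v : List α} (hv : ∀ w, k :: w ≠ v) (y : H) :
    adjoint (creation 𝕜 H k) (wordEmbedding 𝕜 H v y) = 0 := by
  ext w
  rw [adjoint_creation_apply, wordEmbedding_apply, lp.single_apply_ne _ _ _ (hv w)]
  rfl

lemma adjoint_vacuum_vacuum (y : H) : adjoint (vacuum 𝕜 α H) (vacuum 𝕜 α H y) = y :=
  congr($((wordEmbedding 𝕜 H ([] : List α)).adjoint_comp_self) y)

lemma adjoint_creation_vacuum (k : α) (y : H) :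
    adjoint (creation 𝕜 H k) (vacuum 𝕜 α H y) = 0 :=
  adjoint_creation_wordEmbedding (List.cons_ne_nil k) y

lemma adjoint_vacuum_creation (k : α) (f : FockSpace α H) :
    adjoint (vacuum 𝕜 α H) (creation 𝕜 H k f) = 0 := by
  refine ext_inner_left 𝕜 fun y => ?_
  rw [adjoint_inner_right, ← adjoint_inner_left, adjoint_creation_vacuum, inner_zero_left,
    inner_zero_right]

lemma adjoint_creation_comp_self (k : α) : adjoint (creation 𝕜 H k) ∘L creation 𝕜 H k = 1 :=
  LinearIsometry.adjoint_comp_self _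

lemma adjoint_creation_comp_creation {j k : α} (hjk : j ≠ k) :
    adjoint (creation 𝕜 H j) ∘L creation 𝕜 H k = 0 := by
  refine lp.ext_continuousLinearMap (by norm_num) fun w => ?_
  ext1 y
  change adjoint (creation 𝕜 H j) (creation 𝕜 H k (wordEmbedding 𝕜 H w y)) = 0
  rw [creation_wordEmbedding]
  exact adjoint_creation_wordEmbedding (fun v h => hjk (List.cons.inj h).1) y

end FockSpace

section IsometricDilation

variable {𝕜 α H : Type*} [RCLike 𝕜] [DecidableEq α]
  [NormedAddCommGroup H] [InnerProductSpace 𝕜 H] [CompleteSpace H]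

/-- The operator `Ω (B k)* (B k) Ω*` on the Fock space, `Ω` being the vacuum embedding. When `B k`
is a partial isometry, it is the projection onto the initial space of `Ω (B k) Ω*`. -/
def initialProjection (B : α → H →L[𝕜] H) (k : α) : FockSpace α H →L[𝕜] FockSpace α H :=
  vacuum 𝕜 α H ∘L (adjoint (B k) ∘L B k) ∘L adjoint (vacuum 𝕜 α H)

/-- The coextension of a family `B` to the Fock space that acts as `B k` on the vacuum component
and fills the orthogonal complement of the initial space of `B k` with a creation operator. It
consists of isometries when `B` consists of partial isometries. -/
def isometricDilation (B : α → H →L[𝕜] H) (k : α) : FockSpace α H →L[𝕜] FockSpace α H :=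
  vacuum 𝕜 α H ∘L B k ∘L adjoint (vacuum 𝕜 α H) + creation 𝕜 H k ∘L (1 - initialProjection B k)

lemma adjoint_vacuum_comp_isometricDilation (B : α → H →L[𝕜] H) (k : α) :
    adjoint (vacuum 𝕜 α H) ∘L isometricDilation B k = B k ∘L adjoint (vacuum 𝕜 α H) := by
  ext1 f
  simp only [isometricDilation, comp_apply, add_apply, map_add, adjoint_vacuum_vacuum,
    adjoint_vacuum_creation, add_zero]

lemma adjoint_vacuum_comp_prod_isometricDilation (B : α → H →L[𝕜] H) (w : List α) :
    adjoint (vacuum 𝕜 α H) ∘L (w.map (isometricDilation B)).prod =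
      (w.map B).prod ∘L adjoint (vacuum 𝕜 α H) := by
  induction w with
  | nil => rfl
  | cons k w ih =>
    simp only [List.map_cons, List.prod_cons, mul_def]
    rw [← comp_assoc, adjoint_vacuum_comp_isometricDilation, comp_assoc, ih, comp_assoc]

lemma adjoint_initialProjection (B : α → H →L[𝕜] H) (k : α) :
    adjoint (initialProjection B k) = initialProjection B k := by
  simp only [initialProjection, adjoint_comp, adjoint_adjoint, comp_assoc]

lemma adjoint_isometricDilation (B : α → H →L[𝕜] H) (k : α) :
    adjoint (isometricDilation B k) =
      vacuum 𝕜 α H ∘L adjoint (B k) ∘L adjoint (vacuum 𝕜 α H) +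
        (1 - initialProjection B k) ∘L adjoint (creation 𝕜 H k) := by
  simp only [isometricDilation, map_add, map_sub, adjoint_comp, adjoint_adjoint, adjoint_one,
    adjoint_initialProjection, comp_assoc]

lemma adjoint_isometricDilation_comp (B : α → H →L[𝕜] H) (j k : α) :
    adjoint (isometricDilation B j) ∘L isometricDilation B k =
      vacuum 𝕜 α H ∘L (adjoint (B j) ∘L B k) ∘L adjoint (vacuum 𝕜 α H) +
        (1 - initialProjection B j) ∘L (adjoint (creation 𝕜 H j) ∘L creation 𝕜 H k) ∘L
          (1 - initialProjection B k) := by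
  rw [adjoint_isometricDilation, isometricDilation]
  ext1 f
  simp only [comp_apply, add_apply, map_add, adjoint_vacuum_vacuum, adjoint_vacuum_creation,
    adjoint_creation_vacuum, map_zero, add_zero, zero_add]

variable {B : α → H →L[𝕜] H}

lemma isIdempotentElem_initialProjection {k : α} (hk : B k * star (B k) * B k = B k) :
    IsIdempotentElem (initialProjection B k) := by
  have hBk (y : H) : B k (adjoint (B k) (B k y)) = B k y := congr($hk y)
  ext1 f
  simp only [initialProjection, mul_def, comp_apply, adjoint_vacuum_vacuum, hBk]

lemma adjoint_isometricDilation_comp_self {k : α} (hk : B k * star (B k) * B k = B k) :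
    adjoint (isometricDilation B k) ∘L isometricDilation B k = 1 := by
  rw [adjoint_isometricDilation_comp, adjoint_creation_comp_self, one_def, id_comp, ← one_def,
    ← mul_def (1 - _), (isIdempotentElem_initialProjection hk).one_sub.eq]
  exact add_sub_cancel (initialProjection B k) 1

lemma adjoint_isometricDilation_comp_of_ne {j k : α} (hjk : j ≠ k)
    (hB : star (B j) * B k = 0) :
    adjoint (isometricDilation B j) ∘L isometricDilation B k = 0 := by
  rw [star_eq_adjoint, mul_def] at hB
  simp only [adjoint_isometricDilation_comp, adjoint_creation_comp_creation hjk, hB, zero_comp,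
    comp_zero, add_zero]

end IsometricDilation

section Classes

variable {N : ℕ}

lemma IsOrthogonalPartialIsometries.memCP_one {H : Type} [NormedAddCommGroup H]
    [InnerProductSpace ℂ H] [CompleteSpace H] {B : Fin N → H →L[ℂ] H}
    (hB : IsOrthogonalPartialIsometries B) : MemCP N 1 B := by
  refine ⟨⟨FockSpace (Fin N) H, vacuum ℂ (Fin N) H, LinearIsometry.isometry _,
    isometricDilation B, fun k => adjoint_isometricDilation_comp_self (hB.mul_star_mul_self k),
    fun j k hjk => adjoint_isometricDilation_comp_of_ne hjk (hB.star_mul_eq_zero hjk),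
    fun w _ => ?_⟩⟩
  rw [← comp_assoc, adjoint_vacuum_comp_prod_isometricDilation, Complex.ofReal_one, one_smul]
  ext1 y
  simp only [comp_apply, adjoint_vacuum_vacuum]

lemma MemCP.of_dilation {ρ σ : ℝ} {X Y : Type*} [NormedAddCommGroup X] [InnerProductSpace ℂ X]
    [CompleteSpace X] [NormedAddCommGroup Y] [InnerProductSpace ℂ Y] [CompleteSpace Y]
    {A : Fin N → X →L[ℂ] X} {B : Fin N → Y →L[ℂ] Y} (hB : MemCP N σ B) {ι : X →L[ℂ] Y}
    (hι : Isometry ι)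
    (hA : ∀ w : List (Fin N), w ≠ [] →
      (w.map A).prod = (ρ : ℂ) • (adjoint ι ∘L ((w.map B).prod ∘L ι))) :
    MemCP N (ρ * σ) A := by
  obtain ⟨⟨K, κ, hκ, V, hV, hVo, hBV⟩⟩ := hB
  refine ⟨⟨K, κ ∘L ι, hκ.comp hι, V, hV, hVo, fun w hw => ?_⟩⟩
  rw [hA w hw, hBV w hw]
  simp only [adjoint_comp, comp_assoc, smul_comp, comp_smul, smul_smul, Complex.ofReal_mul]

end Classes

/-- every `N`-tuple admitting a uniform unitary `ρ`-dilation admits a uniform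
isometric `ρ`-dilation in the sense of Popescu, i.e. `C^u_{ρ,N} ⊆ C^P_{ρ,N}`. -/
theorem memCu_subset_memCP (N : ℕ) (hN : 1 ≤ N) (ρ : ℝ) (hρ : 0 < ρ)
    {X : Type*} [NormedAddCommGroup X] [InnerProductSpace ℂ X] [CompleteSpace X]
    (A : Fin N → X →L[ℂ] X) (hA : MemCu N ρ A) : MemCP N ρ A := by
  obtain ⟨⟨Y, ι, hι, B, hB, hdil⟩⟩ := hA
  have hunif : IsUniformlyUnitary B := fun ζ hζ => Unitary.mem_iff.2 (hB ζ hζ).symm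
  have hdilB : MemCP N 1 B := hunif.isOrthogonalPartialIsometries.memCP_one
  simpa only [mul_one] using hdilB.of_dilation hι hdil
end
end
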